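/- arXiv:2201.05802 — 4 statements merged into one kernel-verified Lean document; each statement's English description precedes it below -/
import Mathlib

section
/- Let T be a finite tree whose vertex set is partitioned into a set N of terminal nodes and a set S of Steiner nodes, where every Steiner node has degree at least 3 in T and every terminal node has degree at most 3 in T. Then there exist a finite tree T′ whose vertex set is partitioned into the same terminal set N and a Steiner set S′, and a surjection f from the vertex set of T′ onto the vertex set of T, such that: (i) f is the identity on N, so the fiber f⁻¹(t) of every terminal t is the singleton {t}; (ii) f maps S′ onto S, and for each Steiner node s of degree K in T the fiber f⁻¹(s) consists of exactly K − 2 vertices of S′, each of degree exactly 3 in T′, and induces a connected subgraph of T′; (iii) two distinct vertices u, v of T are adjacent in T if and only if some edge of T′ joins a vertex of f⁻¹(u) to a vertex of f⁻¹(v), and in that case this edge of T′ is unique. In particular, every tree topology with Steiner nodes of degree K ≥ 3 is derived by contraction from a Steiner topology in which every Steiner node has degree exactly 3. -/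
open scoped Classical

theorem aux_num (m i : ℕ) (hi : i < m) :
    ((Finset.range (m+2)).filter (fun j => min (j-1) (m-1) = i)).card +
    ((Finset.range m).filter (fun j => j + 1 = i ∨ i + 1 = j)).card = 3 := by
  by_cases h1 : m = 1
  · subst h1
    obtain rfl : i = 0 := by omega
    decide
  by_cases h0 : i = 0
  · subst h0
    have e1 : ((Finset.range (m+2)).filter (fun j => min (j-1) (m-1) = 0)) = {0, 1} := by
      ext j; simp only [Finset.mem_filter, Finset.mem_range, Finset.mem_insert, Finset.mem_singleton]; omega
    have e2 : ((Finset.range m).filter (fun j => j + 1 = 0 ∨ 0 + 1 = j)) = {1} := by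
      ext j; simp only [Finset.mem_filter, Finset.mem_range, Finset.mem_singleton]; omega
    rw [e1, e2]; rfl
  by_cases h2 : i + 1 = m
  · have e1 : ((Finset.range (m+2)).filter (fun j => min (j-1) (m-1) = i)) = {m, m+1} := by
      ext j; simp only [Finset.mem_filter, Finset.mem_range, Finset.mem_insert, Finset.mem_singleton]; omega
    have e2 : ((Finset.range m).filter (fun j => j + 1 = i ∨ i + 1 = j)) = {i-1} := by
      ext j; simp only [Finset.mem_filter, Finset.mem_range, Finset.mem_singleton]; omega
    rw [e1, e2, Finset.card_pair (by omega), Finset.card_singleton]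
  · have e1 : ((Finset.range (m+2)).filter (fun j => min (j-1) (m-1) = i)) = {i+1} := by
      ext j; simp only [Finset.mem_filter, Finset.mem_range, Finset.mem_singleton]; omega
    have e2 : ((Finset.range m).filter (fun j => j + 1 = i ∨ i + 1 = j)) = {i-1, i+1} := by
      ext j; simp only [Finset.mem_filter, Finset.mem_range, Finset.mem_insert, Finset.mem_singleton]; omega
    rw [e1, e2, Finset.card_pair (by omega), Finset.card_singleton]

theorem aux_enum {V : Type*} [Fintype V] (T : SimpleGraph V) (u : V) :
    ∃ e : V → ℕ, Set.InjOn e {v | T.Adj u v} ∧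
      (T.neighborFinset u).image e = Finset.range (T.degree u) := by
  let E := (T.neighborFinset u).equivFin
  refine ⟨fun v => if h : v ∈ T.neighborFinset u then (E ⟨v, h⟩ : ℕ) else 0, ?_, ?_⟩
  · intro a ha b hb hab
    have ha' : a ∈ T.neighborFinset u := by simpa using ha
    have hb' : b ∈ T.neighborFinset u := by simpa using hb
    simp only [ha', hb', dif_pos] at hab
    have := E.injective (Fin.ext hab)
    simpa using this
  · ext j
    simp only [Finset.mem_image, Finset.mem_range]
    constructor
    · rintro ⟨a, ha, rfl⟩
      rw [dif_pos ha]
      exact (E ⟨a, ha⟩).2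
    · intro hj
      refine ⟨(E.symm ⟨j, hj⟩ : V), (E.symm ⟨j, hj⟩).2, ?_⟩
      rw [dif_pos (E.symm ⟨j, hj⟩).2]
      exact congrArg Fin.val (E.apply_symm_apply ⟨j, hj⟩)

/-- expanded graph -/
def auxG {V W : Type*} (T : SimpleGraph V) (f : W → V) (pos : W → ℕ) (port : V → V → ℕ) :
    SimpleGraph W where
  Adj a b := (f a = f b ∧ (pos b + 1 = pos a ∨ pos a + 1 = pos b)) ∨
    (T.Adj (f a) (f b) ∧ pos a = port (f a) (f b) ∧ pos b = port (f b) (f a))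
  symm := ⟨by
    rintro a b (⟨h, h'⟩ | ⟨h, h1, h2⟩)
    · exact Or.inl ⟨h.symm, h'.symm⟩
    · exact Or.inr ⟨h.symm, h2, h1⟩⟩
  loopless := ⟨by
    rintro a (⟨h, h'⟩ | ⟨h, h1, h2⟩)
    · omega
    · exact T.irrefl h⟩

theorem aux_fiber {V W : Type*} [Fintype W] (f : W → V) (pos : W → ℕ) (m : V → ℕ)
    (hinj : ∀ a b, f a = f b → pos a = pos b → a = b)
    (hlt : ∀ a, pos a < m (f a))
    (hsurj : ∀ v i, i < m v → ∃ a, f a = v ∧ pos a = i) (v : V) (P : ℕ → Prop) [DecidablePred P] :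
    (Finset.univ.filter (fun a => f a = v ∧ P (pos a))).card =
      ((Finset.range (m v)).filter P).card := by
  refine Finset.card_nbij pos ?_ ?_ ?_
  · intro a ha
    simp only [Finset.coe_filter, Finset.mem_filter, Finset.mem_univ, true_and, Finset.mem_range, Set.mem_ofPred_eq] at ha ⊢
    exact ⟨ha.1 ▸ hlt a, ha.2⟩
  · intro a ha b hb h
    simp only [Finset.coe_filter, Finset.mem_univ, true_and, Set.mem_ofPred_eq] at ha hb
    exact hinj a b (ha.1.trans hb.1.symm) h
  · intro i hi
    simp only [Finset.coe_filter, Finset.mem_range, Set.mem_ofPred_eq] at hi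
    obtain ⟨a, ha, rfl⟩ := hsurj v i hi.1
    exact ⟨a, by simp [ha, hi.2], rfl⟩

theorem aux_deg {V W : Type*} [Fintype V] [Fintype W] (T : SimpleGraph V)
    (f : W → V) (pos : W → ℕ) (m : V → ℕ) (e : V → V → ℕ)
    (hinj : ∀ a b, f a = f b → pos a = pos b → a = b)
    (hlt : ∀ a, pos a < m (f a))
    (hsurj : ∀ v i, i < m v → ∃ a, f a = v ∧ pos a = i)
    (he : ∀ u, Set.InjOn (e u) {v | T.Adj u v})
    (he' : ∀ u, (T.neighborFinset u).image (e u) = Finset.range (T.degree u))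
    (hm : ∀ v, 0 < m v) (a : W) :
    (auxG T f pos (fun u v => min (e u v - 1) (m u - 1))).degree a =
      ((Finset.range (T.degree (f a))).filter
        (fun j => min (j-1) (m (f a)-1) = pos a)).card +
      ((Finset.range (m (f a))).filter (fun j => j + 1 = pos a ∨ pos a + 1 = j)).card := by
  have h1 := aux_fiber f pos m hinj hlt hsurj (f a) (fun j => j + 1 = pos a ∨ pos a + 1 = j)
  rw [← h1]
  have h2 : ((Finset.range (T.degree (f a))).filter
        (fun j => min (j-1) (m (f a)-1) = pos a)).card =
      ((T.neighborFinset (f a)).filter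
        (fun v => min (e (f a) v - 1) (m (f a) - 1) = pos a)).card := by
    rw [← he' (f a), Finset.filter_image, Finset.card_image_of_injOn]
    intro x hx y hy h
    refine he (f a) ?_ ?_ h
    · have := (Finset.mem_filter.1 hx).1
      simpa using this
    · have := (Finset.mem_filter.1 hy).1
      simpa using this
  set port : V → V → ℕ := fun u v => min (e u v - 1) (m u - 1) with hport
  have h3 : (Finset.univ.filter (fun b => T.Adj (f a) (f b) ∧ pos a = port (f a) (f b) ∧
      pos b = port (f b) (f a))).card = ((T.neighborFinset (f a)).filter
        (fun v => min (e (f a) v - 1) (m (f a) - 1) = pos a)).card := by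
    refine Finset.card_nbij f ?_ ?_ ?_
    · intro b hb
      have hb := (Finset.mem_filter.1 hb).2
      refine Finset.mem_filter.2 ⟨by simpa using hb.1, hb.2.1.symm⟩
    · intro b hb c hc h
      have hb := (Finset.mem_filter.1 hb).2
      have hc := (Finset.mem_filter.1 hc).2
      refine hinj b c h ?_
      rw [hb.2.2, hc.2.2, h]
    · intro v hv
      have hv := Finset.mem_filter.1 hv
      obtain ⟨b, rfl, hb⟩ := hsurj v (port v (f a)) (by have := hm v; simp only [hport]; omega)
      refine ⟨b, Finset.mem_filter.2 ⟨Finset.mem_univ _, ?_, hv.2.symm, hb⟩, rfl⟩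
      simpa using hv.1
  rw [h2, ← h3, add_comm, ← Finset.card_union_of_disjoint, ← SimpleGraph.card_neighborFinset_eq_degree]
  · congr 1
    ext b
    rw [SimpleGraph.mem_neighborFinset]
    simp only [Finset.mem_union, Finset.mem_filter, Finset.mem_univ, true_and]
    rw [eq_comm (a := f b) (b := f a)]
    exact Iff.rfl
  · rw [Finset.disjoint_left]
    intro b hb hb'
    have hb := (Finset.mem_filter.1 hb).2
    have hb' := (Finset.mem_filter.1 hb').2
    rw [hb.1] at hb'
    exact T.irrefl hb'.1

theorem aux_conn_fiber {V W : Type*} (T : SimpleGraph V)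
    (f : W → V) (pos : W → ℕ) (m : V → ℕ) (port : V → V → ℕ)
    (hinj : ∀ a b, f a = f b → pos a = pos b → a = b)
    (hlt : ∀ a, pos a < m (f a))
    (hsurj : ∀ v i, i < m v → ∃ a, f a = v ∧ pos a = i)
    (hm : ∀ v, 0 < m v) (v : V) :
    ((auxG T f pos port).induce (f ⁻¹' {v})).Connected := by
  obtain ⟨r, hr, hr0⟩ := hsurj v 0 (hm v)
  have key : ∀ i, ∀ a (ha : f a = v), pos a = i →
      ((auxG T f pos port).induce (f ⁻¹' {v})).Reachable ⟨r, hr⟩ ⟨a, ha⟩ := by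
    intro i
    induction i with
    | zero =>
      intro a ha h0
      obtain rfl := hinj r a (hr.trans ha.symm) (hr0.trans h0.symm)
      exact SimpleGraph.Reachable.refl _
    | succ i ih =>
      intro a ha hi
      obtain ⟨b, hb, hbi⟩ := hsurj v i (by have := hlt a; rw [ha] at this; omega)
      refine (ih b hb hbi).trans (SimpleGraph.Adj.reachable ?_)
      have h5 : pos b + 1 = pos a := by omega
      exact Or.inl ⟨hb.trans ha.symm, Or.inr h5⟩
  have : Nonempty (f ⁻¹' {v} : Set W) := ⟨⟨r, hr⟩⟩
  refine SimpleGraph.Connected.mk ?_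
  rintro ⟨a, ha⟩ ⟨b, hb⟩
  exact (key _ a ha rfl).symm.trans (key _ b hb rfl)

theorem aux_conn {V W : Type*} (T : SimpleGraph V) (hT : T.Connected)
    (f : W → V) (pos : W → ℕ) (m : V → ℕ) (port : V → V → ℕ)
    (hinj : ∀ a b, f a = f b → pos a = pos b → a = b)
    (hlt : ∀ a, pos a < m (f a))
    (hsurj : ∀ v i, i < m v → ∃ a, f a = v ∧ pos a = i)
    (hm : ∀ v, 0 < m v) (hport : ∀ u v, port u v < m u) :
    (auxG T f pos port).Connected := by
  have key : ∀ a b, f a = f b → (auxG T f pos port).Reachable a b := by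
    intro a b h
    have := (aux_conn_fiber T f pos m port hinj hlt hsurj hm (f b)).preconnected ⟨a, h⟩ ⟨b, rfl⟩
    exact this.map (SimpleGraph.Embedding.induce _).toHom
  have key2 : ∀ u v, T.Walk u v → ∀ a b, f a = u → f b = v →
      (auxG T f pos port).Reachable a b := by
    intro u v p
    induction p with
    | nil => intro a b ha hb; exact key a b (ha.trans hb.symm)
    | @cons u w v h p ih =>
      intro a b ha hb
      obtain ⟨c, hc, hc'⟩ := hsurj u (port u w) (hport _ _)
      obtain ⟨d, hd, hd'⟩ := hsurj w (port w u) (hport _ _)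
      refine (key a c (ha.trans hc.symm)).trans (SimpleGraph.Reachable.trans ?_ (ih d b hd hb))
      refine SimpleGraph.Adj.reachable (Or.inr ⟨?_, ?_, ?_⟩)
      · rwa [hc, hd]
      · rw [hc, hd, hc']
      · rw [hc, hd, hd']
  obtain ⟨v⟩ := hT.nonempty
  obtain ⟨r, -, -⟩ := hsurj v 0 (hm v)
  have : Nonempty W := ⟨r⟩
  refine SimpleGraph.Connected.mk ?_
  intro a b
  obtain ⟨p⟩ := hT.preconnected (f a) (f b)
  exact key2 _ _ p a b rfl rfl

/-- **Theorem 1.** Every general topology (a finite tree whose vertices are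
partitioned into terminal nodes of degree at most 3 and Steiner nodes of degree
at least 3) is derived by contraction from a Steiner topology: there is a tree
`T′` on the same terminal set `N` together with a Steiner set `S′`, and a
surjection `f` onto the vertices of `T`, such that (i) `f` is the identity on
terminals and terminal fibers are singletons; (ii) `f` maps `S′` onto `S`, the
fiber of a Steiner node of degree `K` consists of exactly `K − 2` Steiner
vertices of `T′`, each of degree exactly 3, and induces a connected subgraph of
`T′`; (iii) distinct vertices of `T` are adjacent iff some edge of `T′` joins
their fibers, and such an edge is then unique. -/
theorem general_topology_from_steiner_topology
    {V : Type*} [Fintype V] (T : SimpleGraph V) (hT : T.IsTree)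
    (N S : Set V) (hunion : N ∪ S = Set.univ) (hdisj : Disjoint N S)
    (hSdeg : ∀ s ∈ S, 3 ≤ T.degree s) (hNdeg : ∀ t ∈ N, T.degree t ≤ 3) :
    ∃ (S' : Type) (_ : Fintype S') (T' : SimpleGraph (↥N ⊕ S'))
      (f : ↥N ⊕ S' → V),
      T'.IsTree ∧ Function.Surjective f ∧
      -- (i) f is the identity on N, and terminal fibers are singletons
      (∀ t : ↥N, f (Sum.inl t) = ↑t) ∧
      (∀ (t : ↥N) (w : ↥N ⊕ S'), f w = ↑t → w = Sum.inl t) ∧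
      -- (ii) f maps S′ onto S, Steiner fibers have K − 2 degree-3 vertices
      -- and induce connected subgraphs
      (∀ s' : S', f (Sum.inr s') ∈ S) ∧
      (∀ s ∈ S, ∃ s' : S', f (Sum.inr s') = s) ∧
      (∀ s ∈ S, (f ⁻¹' {s}).ncard = T.degree s - 2) ∧
      (∀ s ∈ S, ∀ w ∈ f ⁻¹' {s}, T'.degree w = 3) ∧
      (∀ s ∈ S, (T'.induce (f ⁻¹' {s})).Connected) ∧
      -- (iii) adjacency in T corresponds to a unique edge between fibers
      (∀ u v : V, u ≠ v →
        (T.Adj u v ↔ ∃ a b : ↥N ⊕ S', f a = u ∧ f b = v ∧ T'.Adj a b)) ∧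
      (∀ u v : V, T.Adj u v →
        ∃! p : (↥N ⊕ S') × (↥N ⊕ S'),
          f p.1 = u ∧ f p.2 = v ∧ T'.Adj p.1 p.2) := by
  set m : V → ℕ := fun v => if v ∈ S then T.degree v - 2 else 1 with hmdef
  have hmS : ∀ v ∈ S, m v = T.degree v - 2 := fun v hv => if_pos hv
  have hmN : ∀ v, v ∉ S → m v = 1 := fun v hv => if_neg hv
  have hNS : ∀ v, v ∉ S → v ∈ N := by
    intro v hv
    have : v ∈ N ∪ S := by rw [hunion]; trivial
    exact this.resolve_right hv
  have hNS' : ∀ v ∈ N, v ∉ S := fun v hv hv' => Set.disjoint_left.1 hdisj hv hv'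
  have hm : ∀ v, 0 < m v := by
    intro v
    by_cases hv : v ∈ S
    · rw [hmS v hv]; have := hSdeg v hv; omega
    · rw [hmN v hv]; omega
  let E := Fintype.equivFin (Σ s : S, Fin (m s))
  let W := ↥N ⊕ Fin (Fintype.card (Σ s : S, Fin (m s)))
  let f : W → V := Sum.elim (fun t => (t : V)) (fun x => ((E.symm x).1 : V))
  let pos : W → ℕ := Sum.elim (fun _ => 0) (fun x => ((E.symm x).2 : ℕ))
  have hfS : ∀ x, f (Sum.inr x) ∈ S := fun x => (E.symm x).1.2
  have hinj : ∀ a b, f a = f b → pos a = pos b → a = b := by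
    rintro (a | a) (b | b) h h'
    · exact congrArg Sum.inl (Subtype.ext h)
    · exact absurd (h ▸ hfS b : f (Sum.inl a) ∈ S) (hNS' _ a.2)
    · exact absurd (h ▸ hfS a : f (Sum.inl b) ∈ S) (hNS' _ b.2)
    · refine congrArg Sum.inr (E.symm.injective ?_)
      change ((E.symm a).1 : V) = ((E.symm b).1 : V) at h
      change ((E.symm a).2 : ℕ) = ((E.symm b).2 : ℕ) at h'
      generalize E.symm a = x at *
      generalize E.symm b = y at *
      obtain ⟨⟨x, hx⟩, i⟩ := x
      obtain ⟨⟨y, hy⟩, j⟩ := y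
      dsimp only at h h'
      subst h
      congr 1
      exact Fin.ext h'
  have hlt : ∀ a, pos a < m (f a) := by
    rintro (a | a)
    · exact hm _
    · exact (E.symm a).2.2
  have hsurj : ∀ v i, i < m v → ∃ a, f a = v ∧ pos a = i := by
    intro v i hi
    by_cases hv : v ∈ S
    · refine ⟨Sum.inr (E ⟨⟨v, hv⟩, ⟨i, hi⟩⟩), ?_, ?_⟩
      · simp [f]
      · simp only [pos, Sum.elim_inr]
        rw [E.symm_apply_apply]
    · refine ⟨Sum.inl ⟨v, hNS v hv⟩, rfl, ?_⟩
      rw [hmN v hv] at hi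
      change 0 = i
      omega
  choose e he he' using aux_enum T
  set port : V → V → ℕ := fun u v => min (e u v - 1) (m u - 1) with hportdef
  have hport : ∀ u v, port u v < m u := by
    intro u v
    have := hm u
    simp only [hportdef]; omega
  set G := auxG T f pos port with hG
  have hdeg := aux_deg T f pos m e hinj hlt hsurj he he' hm
  have hdegS : ∀ a, f a ∈ S → G.degree a = 3 := by
    intro a ha
    refine (hdeg a).trans ?_
    have h := hmS _ ha
    have h3 := hSdeg _ ha
    have h4 : T.degree (f a) = m (f a) + 2 := by omega
    rw [h4]
    exact aux_num _ _ (hlt a)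
  have hdegN : ∀ a, f a ∉ S → G.degree a = T.degree (f a) := by
    intro a ha
    refine (hdeg a).trans ?_
    have h := hmN _ ha
    have h0 := hlt a
    rw [h] at h0 ⊢
    have h1 : pos a = 0 := by omega
    rw [h1]
    simp
  have hcard : ∀ v, (Finset.univ.filter (fun a => f a = v)).card = m v := by
    intro v
    have := aux_fiber f pos m hinj hlt hsurj v (fun _ => True)
    simpa using this
  have hconn : G.Connected := aux_conn T hT.connected f pos m port hinj hlt hsurj hm hport
  have htree : G.IsTree := by
    rw [SimpleGraph.isTree_iff_connected_and_card]
    refine ⟨hconn, ?_⟩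
    have hs1 : ∑ v, ∑ a ∈ Finset.univ.filter (fun a => f a = v), G.degree a = ∑ a, G.degree a :=
      Finset.sum_fiberwise _ _ _
    have hs2 : ∑ v, (Finset.univ.filter (fun a => f a = v)).card = Fintype.card W :=
      (Finset.card_eq_sum_card_fiberwise (fun _ _ => Finset.mem_univ _)).symm
    have hv : ∀ v, (∑ a ∈ Finset.univ.filter (fun a => f a = v), G.degree a) + 2 =
        T.degree v + 2 * (Finset.univ.filter (fun a => f a = v)).card := by
      intro v
      by_cases hvS : v ∈ S
      · rw [Finset.sum_congr rfl (g := fun _ => 3)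
          (fun a ha => hdegS a (by rw [(Finset.mem_filter.1 ha).2]; exact hvS))]
        rw [Finset.sum_const, hcard, hmS v hvS, smul_eq_mul]
        have := hSdeg v hvS
        omega
      · rw [Finset.sum_congr rfl (g := fun _ => T.degree v)
          (fun a ha => by
            have h := (Finset.mem_filter.1 ha).2
            rw [hdegN a (by rw [h]; exact hvS), h])]
        rw [Finset.sum_const, hcard, hmN v hvS, smul_eq_mul]
        omega
    have hs3 := Finset.sum_congr (rfl : (Finset.univ : Finset V) = Finset.univ) (fun v _ => hv v)
    rw [Finset.sum_add_distrib, Finset.sum_add_distrib, ← Finset.mul_sum, hs1, hs2,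
      G.sum_degrees_eq_twice_card_edges, T.sum_degrees_eq_twice_card_edges,
      Finset.sum_const, smul_eq_mul, Finset.card_univ] at hs3
    have := hT.card_edgeFinset
    rw [Nat.card_eq_fintype_card, Nat.card_eq_fintype_card, ← SimpleGraph.edgeFinset_card]
    change _ = Fintype.card W
    omega
  have hadj : ∀ u v, T.Adj u v → ∀ a b, f a = u → f b = v → (G.Adj a b ↔
      pos a = port u v ∧ pos b = port v u) := by
    rintro u v h a b rfl rfl
    constructor
    · rintro (⟨h1, -⟩ | ⟨-, h1⟩)
      · exact absurd h1 h.ne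
      · exact h1
    · intro h1
      exact Or.inr ⟨h, h1⟩
  refine ⟨Fin (Fintype.card (Σ s : S, Fin (m s))), inferInstance, G, f, htree, ?_, fun _ => rfl,
    ?_, hfS, ?_, ?_, ?_, ?_, ?_, ?_⟩
  · intro v
    obtain ⟨a, ha, -⟩ := hsurj v 0 (hm v)
    exact ⟨a, ha⟩
  · intro t w hw
    refine hinj w (Sum.inl t) hw ?_
    have h1 := hlt w
    rw [hw, hmN _ (hNS' _ t.2)] at h1
    change pos w = 0
    omega
  · intro s hs
    obtain ⟨a, ha, -⟩ := hsurj s 0 (hm s)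
    rcases a with a | a
    · exact absurd (ha ▸ a.2 : s ∈ N) (fun h => hNS' s h hs)
    · exact ⟨a, ha⟩
  · intro s hs
    rw [← hmS s hs, ← hcard s, ← Set.ncard_coe_finset]
    congr 1
    ext a
    exact ⟨fun h => Finset.mem_coe.2 (Finset.mem_filter.2 ⟨Finset.mem_univ _, h⟩),
      fun h => (Finset.mem_filter.1 (Finset.mem_coe.1 h)).2⟩
  · intro s hs w hw
    have hw : f w = s := hw
    have := hdegS w (hw ▸ hs)
    convert this
  · intro s hs
    exact aux_conn_fiber T f pos m port hinj hlt hsurj hm s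
  · intro u v huv
    constructor
    · intro h
      obtain ⟨a, ha, ha'⟩ := hsurj u _ (hport u v)
      obtain ⟨b, hb, hb'⟩ := hsurj v _ (hport v u)
      exact ⟨a, b, ha, hb, (hadj u v h a b ha hb).2 ⟨ha', hb'⟩⟩
    · rintro ⟨a, b, rfl, rfl, h | h⟩
      · exact absurd h.1 huv
      · exact h.1
  · intro u v h
    obtain ⟨a, ha, ha'⟩ := hsurj u _ (hport u v)
    obtain ⟨b, hb, hb'⟩ := hsurj v _ (hport v u)
    refine ⟨(a, b), ⟨ha, hb, (hadj u v h a b ha hb).2 ⟨ha', hb'⟩⟩, ?_⟩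
    rintro ⟨c, d⟩ ⟨hc, hd, hcd⟩
    have hc : f c = u := hc
    have hd : f d = v := hd
    have := (hadj u v h c d hc hd).1 hcd
    exact Prod.ext (hinj c a (hc.trans ha.symm) (this.1.trans ha'.symm))
      (hinj d b (hd.trans hb.symm) (this.2.trans hb'.symm))
end

section
/- In the rooted dynamic-programming setting, suppose φ : Fin M → A → ℝ satisfies the Bellman equation. Then for every node i and every location p ∈ A, φ i p equals the minimum, over all assignments x : Fin M → A with x i = p, of the cost of the subtree rooted at i, namely Σ_{j a descendant of i} c j (x j) + Σ_{j a descendant of i, j ≠ i} w j (x j) (x (parent j)). -/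
open scoped Classical

/-- If `φ` satisfies the Bellman equation for the rooted dynamic program, then
`φ i p` is the minimum, over all assignments `x` with `x i = p`, of the cost of
the subtree rooted at `i` (node costs of all descendants of `i` plus the edge
costs from every proper descendant to its parent). -/
theorem bellman_eq_subtree_min
    {M : ℕ} (hM : 1 ≤ M) (r : Fin M) (hr : (r : ℕ) = M - 1)
    (parent : Fin M → Fin M) (hpar : ∀ i : Fin M, i ≠ r → i < parent i)
    (hroot : parent r = r)
    {A : Type*} [Fintype A] [Nonempty A]
    (c : Fin M → A → ℝ) (w : Fin M → A → A → ℝ) (φ : Fin M → A → ℝ)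
    (hφ : ∀ (i : Fin M) (p : A), φ i p = c i p +
      ∑ j ∈ Finset.univ.filter (fun j : Fin M => j ≠ r ∧ parent j = i),
        Finset.univ.inf' Finset.univ_nonempty (fun q : A => w j q p + φ j q)) :
    ∀ (i : Fin M) (p : A),
      IsLeast
        ((fun x : Fin M → A =>
            (∑ j ∈ Finset.univ.filter (fun j : Fin M => ∃ n : ℕ, parent^[n] j = i),
              c j (x j)) +
            ∑ j ∈ (Finset.univ.filter
                (fun j : Fin M => ∃ n : ℕ, parent^[n] j = i)).erase i,
              w j (x j) (x (parent j))) '' {x : Fin M → A | x i = p})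
        (φ i p) := by
  intro i p
  have hle1 : ∀ j, j ≤ parent j := by
    intro j
    by_cases h : j = r
    · rw [h, hroot]
    · exact (hpar j h).le
  have hle : ∀ (n : ℕ) (j : Fin M), j ≤ parent^[n] j := by
    intro n
    induction n with
    | zero => intro j; exact le_rfl
    | succ n ih =>
      intro j
      rw [Function.iterate_succ_apply]
      exact (hle1 j).trans (ih _)
  have hrit : ∀ n : ℕ, parent^[n] r = r := fun n => Function.iterate_fixed hroot n
  generalize hS : Finset.univ.filter (fun j : Fin M => ∃ n : ℕ, parent^[n] j = i) = S
  have memS : ∀ j, j ∈ S ↔ ∃ n : ℕ, parent^[n] j = i := by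
    intro j; rw [← hS]; simp
  have hiS : i ∈ S := (memS i).2 ⟨0, rfl⟩
  have key : ∀ k, k ∈ S.erase i ↔ (k ≠ r ∧ parent k ∈ S) := by
    intro k
    rw [Finset.mem_erase, memS, memS]
    constructor
    · rintro ⟨hk, n, hn⟩
      refine ⟨?_, ?_⟩
      · rintro rfl
        exact hk ((hrit n).symm.trans hn)
      · cases n with
        | zero => exact absurd hn hk
        | succ n => exact ⟨n, hn⟩
    · rintro ⟨hk, n, hn⟩
      refine ⟨?_, n + 1, hn⟩
      rintro rfl
      have h1 := hle n (parent k)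
      rw [hn] at h1
      exact absurd (hpar k hk) (not_lt.2 h1)
  set m : Fin M → A → ℝ := fun j p =>
    Finset.univ.inf' Finset.univ_nonempty (fun q : A => w j q p + φ j q) with hm
  have hcost : ∀ x : Fin M → A,
      (∑ j ∈ S, c j (x j)) + ∑ j ∈ S.erase i, w j (x j) (x (parent j)) =
      φ i (x i) + ∑ k ∈ S.erase i,
        (w k (x k) (x (parent k)) + φ k (x k) - m k (x (parent k))) := by
    intro x
    have h1 : ∑ j ∈ S, φ j (x j) = ∑ j ∈ S, c j (x j) +
        ∑ k ∈ S.erase i, m k (x (parent k)) := by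
      rw [← Finset.sum_fiberwise_of_maps_to (s := S.erase i) (t := S) (g := parent)
        (fun k hk => ((key k).1 hk).2), ← Finset.sum_add_distrib]
      refine Finset.sum_congr rfl fun j hj => ?_
      rw [hφ j (x j)]
      congr 1
      have hf : Finset.univ.filter (fun k : Fin M => k ≠ r ∧ parent k = j) =
          (S.erase i).filter (fun k => parent k = j) := by
        ext k
        rw [Finset.mem_filter, Finset.mem_filter, key]
        constructor
        · rintro ⟨_, h, rfl⟩
          exact ⟨⟨h, hj⟩, rfl⟩
        · rintro ⟨⟨h, _⟩, h2⟩
          exact ⟨Finset.mem_univ _, h, h2⟩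
      rw [hf]
      refine Finset.sum_congr rfl fun k hk => ?_
      rw [(Finset.mem_filter.1 hk).2]
    rw [← Finset.add_sum_erase S (fun j => φ j (x j)) hiS] at h1
    rw [Finset.sum_sub_distrib, Finset.sum_add_distrib]
    linarith
  have hmin : ∀ (k : Fin M) (a : A), ∃ q, m k a = w k q a + φ k q := by
    intro k a
    obtain ⟨q, _, hq⟩ := Finset.exists_mem_eq_inf' (Finset.univ_nonempty (α := A))
      (fun q : A => w k q a + φ k q)
    exact ⟨q, hq⟩
  choose g hg using hmin
  constructor
  · have hwf : WellFounded (fun a b : Fin M => a > b) := wellFounded_gt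
    let F : (k : Fin M) → ((j : Fin M) → j > k → A) → A := fun k rec =>
      if k = i then p else if h : k = r then p else g k (rec (parent k) (hpar k h))
    let x : Fin M → A := hwf.fix F
    have hx : ∀ k, x k = if k = i then p else if k = r then p else g k (x (parent k)) := by
      intro k
      have h := hwf.fix_eq F k
      simpa [F, x] using h
    have hxi : x i = p := by rw [hx]; simp
    refine ⟨x, hxi, ?_⟩
    simp only []
    rw [hcost x, hxi, Finset.sum_eq_zero, add_zero]
    intro k hk
    have hkr := ((key k).1 hk).1
    have hki := (Finset.mem_erase.1 hk).1
    have hxk : x k = g k (x (parent k)) := by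
      rw [hx k, if_neg hki, if_neg hkr]
    have h2 := hg k (x (parent k))
    rw [← hxk] at h2
    linarith
  · rintro _ ⟨x, hxi, rfl⟩
    have hxi' : x i = p := hxi
    simp only []
    rw [hcost x, hxi']
    have : 0 ≤ ∑ k ∈ S.erase i,
        (w k (x k) (x (parent k)) + φ k (x k) - m k (x (parent k))) := by
      refine Finset.sum_nonneg fun k _ => ?_
      have h3 : m k (x (parent k)) ≤ w k (x k) (x (parent k)) + φ k (x k) :=
        Finset.inf'_le (fun q : A => w k q (x (parent k)) + φ k q) (Finset.mem_univ (x k))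
      linarith
    linarith
end

section
/- In the rooted dynamic-programming setting, suppose φ : Fin M → A → ℝ satisfies the Bellman equation. Then min_{p ∈ A} φ r p = min_{x : Fin M → A} Φ(x); that is, the minimum cumulative cost at the root over all root locations equals the minimum total cost of the cable network over all joint assignments of locations to the Steiner nodes. -/
/-- The total cost of the cable network for an assignment `x` of locations to
the Steiner nodes: the sum of the node costs plus the sum, over all non-root
nodes, of the cable cost from the node's location to its parent's location. -/
noncomputable def totalCost {M : ℕ} {A : Type*} (r : Fin M)
    (parent : Fin M → Fin M) (c : Fin M → A → ℝ) (w : Fin M → A → A → ℝ)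
    (x : Fin M → A) : ℝ :=
  (∑ i : Fin M, c i (x i)) +
    ∑ j ∈ Finset.univ.filter (fun j : Fin M => j ≠ r), w j (x j) (x (parent j))

/-- If `φ` satisfies the Bellman equation, then the minimum of `φ r` over all
root locations equals the minimum of the total network cost over all joint
assignments of locations to the Steiner nodes. -/
theorem bellman_root_min_eq_min_totalCost
    {M : ℕ} (hM : 1 ≤ M) (r : Fin M) (hr : (r : ℕ) = M - 1)
    (parent : Fin M → Fin M) (hpar : ∀ i : Fin M, i ≠ r → i < parent i)
    (hroot : parent r = r)
    {A : Type*} [Fintype A] [Nonempty A]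
    (c : Fin M → A → ℝ) (w : Fin M → A → A → ℝ) (φ : Fin M → A → ℝ)
    (hφ : ∀ (i : Fin M) (p : A), φ i p = c i p +
      ∑ j ∈ Finset.univ.filter (fun j : Fin M => j ≠ r ∧ parent j = i),
        Finset.univ.inf' Finset.univ_nonempty (fun q : A => w j q p + φ j q)) :
    Finset.univ.inf' Finset.univ_nonempty (fun p : A => φ r p) =
      Finset.univ.inf' Finset.univ_nonempty
        (fun x : Fin M → A => totalCost r parent c w x) := by
  classical
  set m : Fin M → A → ℝ := fun j p =>
    Finset.univ.inf' Finset.univ_nonempty (fun q : A => w j q p + φ j q) with hm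
  have key : ∀ x : Fin M → A, totalCost r parent c w x = φ r (x r) +
      ∑ j ∈ Finset.univ.filter (fun j : Fin M => j ≠ r),
        (w j (x j) (x (parent j)) + φ j (x j) - m j (x (parent j))) := by
    intro x
    have h1 : ∑ i, φ i (x i) = ∑ i, c i (x i) +
        ∑ j ∈ Finset.univ.filter (fun j : Fin M => j ≠ r), m j (x (parent j)) := by
      rw [← Finset.sum_fiberwise (Finset.univ.filter (fun j : Fin M => j ≠ r)) parent,
        ← Finset.sum_add_distrib]
      refine Finset.sum_congr rfl fun i _ => ?_
      rw [hφ i (x i), Finset.filter_filter]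
      congr 1
      refine Finset.sum_congr rfl fun j hj => ?_
      rw [(Finset.mem_filter.mp hj).2.2]
    have h2 : ∑ i, φ i (x i) = φ r (x r) +
        ∑ j ∈ Finset.univ.filter (fun j : Fin M => j ≠ r), φ j (x j) := by
      rw [Finset.filter_ne', Finset.add_sum_erase _ (fun j => φ j (x j)) (Finset.mem_univ r)]
    rw [Finset.sum_sub_distrib, Finset.sum_add_distrib, totalCost]
    linarith
  apply le_antisymm
  · refine Finset.le_inf' _ _ fun x _ => ?_
    refine (Finset.inf'_le (fun p : A => φ r p) (Finset.mem_univ (x r))).trans ?_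
    rw [key x]
    refine le_add_of_nonneg_right (Finset.sum_nonneg fun j _ => sub_nonneg.mpr ?_)
    exact Finset.inf'_le (fun q : A => w j q (x (parent j)) + φ j q) (Finset.mem_univ (x j))
  · refine Finset.le_inf' _ _ fun p _ => ?_
    have hg : ∀ (j : Fin M) (p : A), ∃ q, m j p = w j q p + φ j q := by
      intro j p
      obtain ⟨q, _, hq⟩ := Finset.exists_mem_eq_inf' Finset.univ_nonempty
        (fun q : A => w j q p + φ j q)
      exact ⟨q, hq⟩
    choose g hg using hg
    have hwf : WellFounded (fun a b : Fin M => b < a) := wellFounded_gt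
    let x : Fin M → A := hwf.fix fun i rec =>
      if h : i = r then p else g i (rec (parent i) (hpar i h))
    have hx : ∀ i, x i = if i = r then p else g i (x (parent i)) := by
      intro i
      have := hwf.fix_eq (C := fun _ => A) (fun i rec =>
        if h : i = r then p else g i (rec (parent i) (hpar i h))) i
      simpa using this
    refine (Finset.inf'_le _ (Finset.mem_univ x)).trans ?_
    rw [key x, hx r, if_pos rfl, Finset.sum_eq_zero, add_zero]
    intro j hj
    rw [hx j, if_neg (Finset.mem_filter.mp hj).2, hg, sub_self]
end

section
/- In the rooted dynamic-programming setting, suppose φ : Fin M → A → ℝ satisfies the Bellman equation, and define an assignment x* : Fin M → A top-down (processing indices in decreasing order, so that each node is assigned after its parent) by choosing x* r ∈ argmin_{p ∈ A} φ r p and, for each j ≠ r, choosing x* j ∈ argmin_{q ∈ A} (w j q (x* (parent j)) + φ j q). Then Φ(x*) = min_{x : Fin M → A} Φ(x); that is, the traceback produces an optimal joint assignment of Steiner node locations. -/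
/-- If `φ` satisfies the Bellman equation and `xs` is an assignment produced by
the top-down traceback (the root location minimizes `φ r`, and each non-root
node's location minimizes `w j q (xs (parent j)) + φ j q` given its parent's
location), then `xs` attains the minimum total cost over all assignments. -/
theorem traceback_optimal
    {M : ℕ} (hM : 1 ≤ M) (r : Fin M) (hr : (r : ℕ) = M - 1)
    (parent : Fin M → Fin M) (hpar : ∀ i : Fin M, i ≠ r → i < parent i)
    (hroot : parent r = r)
    {A : Type*} [Fintype A] [Nonempty A]
    (c : Fin M → A → ℝ) (w : Fin M → A → A → ℝ) (φ : Fin M → A → ℝ)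
    (hφ : ∀ (i : Fin M) (p : A), φ i p = c i p +
      ∑ j ∈ Finset.univ.filter (fun j : Fin M => j ≠ r ∧ parent j = i),
        Finset.univ.inf' Finset.univ_nonempty (fun q : A => w j q p + φ j q))
    (xs : Fin M → A)
    (hxroot : ∀ p : A, φ r (xs r) ≤ φ r p)
    (hxstep : ∀ j : Fin M, j ≠ r → ∀ q : A,
      w j (xs j) (xs (parent j)) + φ j (xs j) ≤ w j q (xs (parent j)) + φ j q) :
    totalCost r parent c w xs =
      Finset.univ.inf' Finset.univ_nonempty
        (fun x : Fin M → A => totalCost r parent c w x) := by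
  have key : ∀ x : Fin M → A, totalCost r parent c w x = φ r (x r) +
      ∑ j ∈ Finset.univ.filter (fun j : Fin M => j ≠ r),
        (w j (x j) (x (parent j)) + φ j (x j) -
          Finset.univ.inf' Finset.univ_nonempty
            (fun q : A => w j q (x (parent j)) + φ j q)) := by
    intro x
    have h1 : ∑ i : Fin M, φ i (x i) = ∑ i : Fin M, c i (x i) +
        ∑ j ∈ Finset.univ.filter (fun j : Fin M => j ≠ r),
          Finset.univ.inf' Finset.univ_nonempty
            (fun q : A => w j q (x (parent j)) + φ j q) := by
      rw [← Finset.sum_fiberwise (Finset.univ.filter (fun j : Fin M => j ≠ r)) parent,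
        ← Finset.sum_add_distrib]
      refine Finset.sum_congr rfl fun i _ => ?_
      rw [hφ i (x i), Finset.filter_filter]
      congr 1
      refine Finset.sum_congr rfl fun j hj => ?_
      rw [(Finset.mem_filter.mp hj).2.2]
    have h2 : ∑ i : Fin M, φ i (x i) = φ r (x r) +
        ∑ j ∈ Finset.univ.filter (fun j : Fin M => j ≠ r), φ j (x j) := by
      rw [Finset.filter_ne', Finset.add_sum_erase _ (fun j => φ j (x j)) (Finset.mem_univ r)]
    rw [totalCost, Finset.sum_sub_distrib, Finset.sum_add_distrib]
    linarith
  apply le_antisymm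
  · refine Finset.le_inf' _ _ fun x _ => ?_
    rw [key, key]
    refine add_le_add (hxroot _) (Finset.sum_le_sum fun j hj => ?_)
    have hj' : j ≠ r := (Finset.mem_filter.mp hj).2
    have a1 : w j (xs j) (xs (parent j)) + φ j (xs j) ≤
        Finset.univ.inf' Finset.univ_nonempty
          (fun q : A => w j q (xs (parent j)) + φ j q) :=
      Finset.le_inf' _ _ fun q _ => hxstep j hj' q
    have a2 : Finset.univ.inf' Finset.univ_nonempty
          (fun q : A => w j q (x (parent j)) + φ j q) ≤
        w j (x j) (x (parent j)) + φ j (x j) :=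
      Finset.inf'_le (fun q : A => w j q (x (parent j)) + φ j q) (Finset.mem_univ (x j))
    linarith
  · exact Finset.inf'_le (fun x : Fin M → A => totalCost r parent c w x) (Finset.mem_univ xs)
end
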